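/- arXiv:2401.05640 — 5 statements merged into one kernel-verified Lean document; each statement's English description precedes it below -/
import Mathlib

section
/- Let G be a distance-regular graph of diameter 3 with intersection array {k, b₁, b₂; 1, c₂, c₃} and let q ≠ 0 be a real number. Then the matrix identity c₂c₃q²·𝔻_q = ((q²+q+1)a₂ − (q²+q)c₃)k·I + (q²c₂c₃ − (q²+q)a₁c₃ + (q²+q+1)(a₁a₂ − b₁c₂ − k))·A + ((q²+q)c₃ − (q²+q+1)(a₁+a₂))·A² + (q²+q+1)·A³ holds. -/
open Matrix

variable {V : Type*} [Fintype V] [DecidableEq V]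

/-- The distance-`i` matrix of a graph: the `(x,y)` entry is 1 if `dist x y = i`, else 0. -/
noncomputable def distM (G : SimpleGraph V) (i : ℕ) : Matrix V V ℝ :=
  Matrix.of fun x y => if G.dist x y = i then (1 : ℝ) else 0

/-- The `q`-distance matrix `𝔻_q = ∑_{i=1}^D (1 + 1/q + ⋯ + 1/q^{i-1}) • A_i`. -/
noncomputable def qDist (G : SimpleGraph V) (D : ℕ) (q : ℝ) : Matrix V V ℝ :=
  ∑ i ∈ Finset.Icc 1 D, (∑ j ∈ Finset.range i, (1 / q) ^ j) • distM G i

/-- `G` is distance-regular with diameter `D` and intersection numbers `b i`, `c i`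
(with `c 1 = 1`): for any vertices `x, y` at distance `i ≤ D`, the number of neighbors
of `y` at distance `i - 1` from `x` is `c i` and the number of neighbors of `y` at
distance `i + 1` from `x` is `b i`. -/
def IsDRG (G : SimpleGraph V) (D : ℕ) (b c : ℕ → ℕ) : Prop :=
  G.Connected ∧
  (∀ x y : V, G.dist x y ≤ D) ∧
  (∃ x y : V, G.dist x y = D) ∧
  c 1 = 1 ∧
  ∀ i ≤ D, ∀ x y : V, G.dist x y = i →
    ({z : V | G.Adj y z ∧ G.dist x z = i - 1} : Set V).ncard = c i ∧
    ({z : V | G.Adj y z ∧ G.dist x z = i + 1} : Set V).ncard = b i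

/-- `a i = k - b i - c i` as a real number, where `k = b 0`. -/
noncomputable def aInt (b c : ℕ → ℕ) (i : ℕ) : ℝ := (b 0 : ℝ) - (b i : ℝ) - (c i : ℝ)

lemma aux_mul (G : SimpleGraph V) (i : ℕ) (x y : V) :
    (distM G i * distM G 1) x y = (({z : V | G.Adj y z ∧ G.dist x z = i} : Set V).ncard : ℝ) := by
  classical
  rw [Matrix.mul_apply, Set.ncard_eq_toFinset_card', Set.toFinset_ofPred, Finset.card_filter]
  push_cast
  refine Finset.sum_congr rfl fun z _ => ?_
  have h : G.dist z y = 1 ↔ G.Adj y z := by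
    rw [SimpleGraph.dist_eq_one_iff_adj, SimpleGraph.adj_comm]
  simp only [distM, Matrix.of_apply, h]
  by_cases h1 : G.Adj y z <;> by_cases h2 : G.dist x z = i <;> simp [h1, h2]

lemma aux_zero (G : SimpleGraph V) (hc : G.Connected) (i : ℕ) (x y : V)
    (h : i + 1 < G.dist x y ∨ G.dist x y + 1 < i) :
    ({z : V | G.Adj y z ∧ G.dist x z = i} : Set V).ncard = 0 := by
  have : ({z : V | G.Adj y z ∧ G.dist x z = i} : Set V) = ∅ := by
    ext z
    simp only [Set.mem_ofPred_eq, Set.mem_empty_iff_false, iff_false]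
    rintro ⟨h1, h2⟩
    have e1 := hc.dist_triangle (u := x) (v := y) (w := z)
    have e2 := hc.dist_triangle (u := x) (v := z) (w := y)
    have e3 := SimpleGraph.dist_eq_one_iff_adj.2 h1
    have e4 := SimpleGraph.dist_eq_one_iff_adj.2 h1.symm
    omega
  rw [this, Set.ncard_empty]

lemma aux_deg (G : SimpleGraph V) (b c : ℕ → ℕ) (hG : IsDRG G 3 b c) (y : V) :
    ({z : V | G.Adj y z} : Set V).ncard = b 0 := by
  obtain ⟨hc, hD, -, h1, H⟩ := hG
  rw [← (H 0 (by norm_num) y y (by simp)).2]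
  congr 1
  ext z
  simp [SimpleGraph.dist_eq_one_iff_adj]

lemma aux_a (G : SimpleGraph V) (b c : ℕ → ℕ) (hG : IsDRG G 3 b c) (i : ℕ) (hi : 1 ≤ i)
    (hi3 : i ≤ 3) (x y : V) (hxy : G.dist x y = i) :
    (({z : V | G.Adj y z ∧ G.dist x z = i} : Set V).ncard : ℝ) = aInt b c i := by
  have hd := aux_deg G b c hG y
  obtain ⟨hc, hD, -, h1, H⟩ := hG
  obtain ⟨H1, H2⟩ := H i hi3 x y hxy
  have hu : ({z : V | G.Adj y z} : Set V) = ({z : V | G.Adj y z ∧ G.dist x z = i - 1} ∪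
      {z : V | G.Adj y z ∧ G.dist x z = i + 1}) ∪ {z : V | G.Adj y z ∧ G.dist x z = i} := by
    ext z
    simp only [Set.mem_ofPred_eq, Set.mem_union]
    constructor
    · intro h
      have e1 := hc.dist_triangle (u := x) (v := y) (w := z)
      have e2 := hc.dist_triangle (u := x) (v := z) (w := y)
      have e3 := SimpleGraph.dist_eq_one_iff_adj.2 h
      have e4 := SimpleGraph.dist_eq_one_iff_adj.2 h.symm
      have : G.dist x z = i - 1 ∨ G.dist x z = i + 1 ∨ G.dist x z = i := by omega
      tauto
    · tauto
  rw [hu, Set.ncard_union_eq _ (Set.toFinite _) (Set.toFinite _),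
    Set.ncard_union_eq _ (Set.toFinite _) (Set.toFinite _), H1, H2] at hd
  · unfold aInt
    rw [← hd]
    push_cast
    ring
  · rw [Set.disjoint_left]
    rintro z ⟨_, h⟩ ⟨_, h'⟩
    omega
  · rw [Set.disjoint_left]
    rintro z (⟨_, h⟩ | ⟨_, h⟩) ⟨_, h'⟩ <;> omega

lemma aux_AA (G : SimpleGraph V) (b c : ℕ → ℕ) (hG : IsDRG G 3 b c) :
    distM G 1 * distM G 1 = (b 0 : ℝ) • (1 : Matrix V V ℝ) + aInt b c 1 • distM G 1
      + (c 2 : ℝ) • distM G 2 := by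
  ext x y
  have ha := aux_a G b c hG 1 le_rfl (by norm_num) x y
  have hz := aux_zero G hG.1 1 x y
  obtain ⟨hc, hD, -, h1, H⟩ := hG
  rw [aux_mul]
  have h0 : x = y ↔ G.dist x y = 0 := hc.dist_eq_zero_iff.symm
  simp only [Matrix.add_apply, Matrix.smul_apply, Matrix.one_apply, distM, Matrix.of_apply, h0,
    smul_eq_mul]
  have := hD x y
  generalize hd : G.dist x y = d at *
  have HH := H d this x y hd
  interval_cases d
  · simpa using HH.2
  · simpa using ha
  · simpa using HH.1
  · simpa using hz

lemma aux_A2A (G : SimpleGraph V) (b c : ℕ → ℕ) (hG : IsDRG G 3 b c) :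
    distM G 2 * distM G 1 = (b 1 : ℝ) • distM G 1 + aInt b c 2 • distM G 2
      + (c 3 : ℝ) • distM G 3 := by
  ext x y
  have ha := aux_a G b c hG 2 (by norm_num) (by norm_num) x y
  have hz := aux_zero G hG.1 2 x y
  obtain ⟨hc, hD, -, h1, H⟩ := hG
  rw [aux_mul]
  simp only [Matrix.add_apply, Matrix.smul_apply, distM, Matrix.of_apply,
    smul_eq_mul]
  have := hD x y
  generalize hd : G.dist x y = d at *
  have HH := H d this x y hd
  interval_cases d
  · simpa using hz
  · simpa using HH.2
  · simpa using ha
  · simpa using HH.1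

/-- Proposition 3.1, matrix identity: for a distance-regular graph of
diameter 3 with intersection array `{k, b₁, b₂; 1, c₂, c₃}` and `q ≠ 0`,
`c₂c₃q² • 𝔻_q = ((q²+q+1)a₂ − (q²+q)c₃)k • I + (q²c₂c₃ − (q²+q)a₁c₃ +
(q²+q+1)(a₁a₂ − b₁c₂ − k)) • A + ((q²+q)c₃ − (q²+q+1)(a₁+a₂)) • A² + (q²+q+1) • A³`. -/
theorem stmt0 (G : SimpleGraph V) (b c : ℕ → ℕ) (hG : IsDRG G 3 b c)
    (q : ℝ) (hq : q ≠ 0) :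
    ((c 2 : ℝ) * (c 3 : ℝ) * q ^ 2) • qDist G 3 q =
      ((((q ^ 2 + q + 1) * aInt b c 2 - (q ^ 2 + q) * (c 3 : ℝ)) * (b 0 : ℝ)) •
          (1 : Matrix V V ℝ))
      + ((q ^ 2 * (c 2 : ℝ) * (c 3 : ℝ) - (q ^ 2 + q) * aInt b c 1 * (c 3 : ℝ)
          + (q ^ 2 + q + 1) * (aInt b c 1 * aInt b c 2 - (b 1 : ℝ) * (c 2 : ℝ) - (b 0 : ℝ))) •
          distM G 1)
      + (((q ^ 2 + q) * (c 3 : ℝ) - (q ^ 2 + q + 1) * (aInt b c 1 + aInt b c 2)) •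
          (distM G 1 * distM G 1))
      + ((q ^ 2 + q + 1) • (distM G 1 * distM G 1 * distM G 1)) := by
  have hs : qDist G 3 q = distM G 1 + (1 + 1 / q) • distM G 2
      + (1 + 1 / q + (1 / q) ^ 2) • distM G 3 := by
    have : Finset.Icc 1 3 = ({1, 2, 3} : Finset ℕ) := by decide
    simp [qDist, this, Finset.sum_range_succ, add_assoc]
  have h2 := aux_A2A G b c hG
  rw [hs, aux_AA G b c hG, Matrix.add_mul, Matrix.add_mul, smul_mul_assoc, smul_mul_assoc, smul_mul_assoc,
    one_mul, h2, aux_AA G b c hG]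
  ext x y
  simp only [Matrix.add_apply, Matrix.smul_apply, smul_eq_mul]
  field_simp
  ring
end

section
/- Let G be a distance-regular graph of diameter 3 with intersection array {k, b₁, b₂; 1, c₂, c₃} and let q ≠ 0 be a real number. Then the matrix identity c₂q²·𝔻_q = c₂(q²+q+1)·J − ((q²+q+1)c₂ − k)·I − ((q+1)c₂ − a₁)·A − A² holds. -/
open Matrix

variable {V : Type*} [Fintype V] [DecidableEq V]

theorem sq_entry (G : SimpleGraph V) (x y : V) :
    (distM G 1 * distM G 1) x y =
      ((Finset.univ.filter fun z => G.dist x z = 1 ∧ G.dist y z = 1).card : ℝ) := by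
  simp only [distM, Matrix.mul_apply, Matrix.of_apply]
  rw [Finset.card_filter]
  push_cast
  refine Finset.sum_congr rfl fun z _ => ?_
  rw [G.dist_comm (u := z) (v := y)]
  by_cases h1 : G.dist x z = 1 <;> by_cases h2 : G.dist y z = 1 <;> simp [h1, h2]

theorem ncard_eq_filter (G : SimpleGraph V) (x y : V) (i : ℕ) :
    ({z : V | G.Adj y z ∧ G.dist x z = i} : Set V).ncard =
      (Finset.univ.filter fun z => G.dist x z = i ∧ G.dist y z = 1).card := by
  rw [← Set.ncard_coe_finset]
  congr 1
  ext z
  simp [SimpleGraph.dist_eq_one_iff_adj, and_comm]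

theorem count_one (G : SimpleGraph V) (hc : G.Connected) (x y : V) (h : G.dist x y = 1) :
    (Finset.univ.filter fun z => G.dist y z = 1 ∧ G.dist y z = 1).card =
      (Finset.univ.filter fun z => G.dist x z = 0 ∧ G.dist y z = 1).card +
      (Finset.univ.filter fun z => G.dist x z = 1 ∧ G.dist y z = 1).card +
      (Finset.univ.filter fun z => G.dist x z = 2 ∧ G.dist y z = 1).card := by
  simp only [Finset.card_filter, ← Finset.sum_add_distrib]
  refine Finset.sum_congr rfl fun z _ => ?_
  have ht := hc.dist_triangle (u := x) (v := y) (w := z)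
  by_cases h2 : G.dist y z = 1
  · have : G.dist x z = 0 ∨ G.dist x z = 1 ∨ G.dist x z = 2 := by omega
    rcases this with h3 | h3 | h3 <;> simp [h2, h3]
  · simp [h2]

/-- Proposition 3.2, matrix identity: for a distance-regular graph of
diameter 3 with intersection array `{k, b₁, b₂; 1, c₂, c₃}` and `q ≠ 0`,
`c₂q² • 𝔻_q = c₂(q²+q+1) • J − ((q²+q+1)c₂ − k) • I − ((q+1)c₂ − a₁) • A − A²`. -/
theorem stmt2 (G : SimpleGraph V) (b c : ℕ → ℕ) (hG : IsDRG G 3 b c)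
    (q : ℝ) (hq : q ≠ 0) :
    ((c 2 : ℝ) * q ^ 2) • qDist G 3 q =
      (((c 2 : ℝ) * (q ^ 2 + q + 1)) • (Matrix.of fun _ _ => (1 : ℝ) : Matrix V V ℝ))
      - (((q ^ 2 + q + 1) * (c 2 : ℝ) - (b 0 : ℝ)) • (1 : Matrix V V ℝ))
      - (((q + 1) * (c 2 : ℝ) - aInt b c 1) • distM G 1)
      - distM G 1 * distM G 1 := by
  obtain ⟨hc, hD, -, hc1, hI⟩ := hG
  simp only [ncard_eq_filter] at hI
  have h0 : ∀ y, (Finset.univ.filter fun z => G.dist y z = 1 ∧ G.dist y z = 1).card = b 0 :=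
    fun y => (hI 0 (by omega) y y (by simp)).2
  ext x y
  simp only [Matrix.sub_apply, Matrix.smul_apply, sq_entry, smul_eq_mul, Matrix.of_apply]
  have hq3 : qDist G 3 q x y = (if G.dist x y = 1 then 1 else 0) +
      (1 + 1 / q) * (if G.dist x y = 2 then 1 else 0) +
      (1 + 1 / q + (1 / q) ^ 2) * (if G.dist x y = 3 then 1 else 0) := by
    have : Finset.Icc 1 3 = ({1, 2, 3} : Finset ℕ) := by decide
    simp [qDist, this, distM, Matrix.add_apply, Finset.sum_range_succ, add_assoc]
  rw [hq3]
  have hA : distM G 1 x y = if G.dist x y = 1 then 1 else 0 := rfl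
  rw [hA]
  have hd := hD x y
  have hcase : G.dist x y = 0 ∨ G.dist x y = 1 ∨ G.dist x y = 2 ∨ G.dist x y = 3 := by omega
  rcases hcase with h | h | h | h
  · have hxy : x = y := hc.dist_eq_zero_iff.1 h
    subst hxy
    rw [h0 x]
    simp
    ring
  · have hxy : x ≠ y := by rintro rfl; simp at h
    have e := count_one G hc x y h
    have h1 := hI 1 (by omega) x y h
    norm_num at h1
    rw [h0 y] at e
    have e' : (b 0 : ℝ) = c 1 +
      ((Finset.univ.filter fun z => G.dist x z = 1 ∧ G.dist y z = 1).card : ℝ) + b 1 := by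
      have h10 := (hI 1 (by omega) x y h).1
      have h12 := (hI 1 (by omega) x y h).2
      simp only [Nat.sub_self, Nat.reduceAdd] at h10 h12
      rw [h10, h12] at e
      exact_mod_cast e
    simp only [h, aInt, Matrix.one_apply_ne hxy]
    norm_num
    linear_combination -e'
  · have hxy : x ≠ y := by rintro rfl; simp at h
    have h1 := (hI 2 (by omega) x y h).1
    simp only [Nat.add_one_sub_one, Nat.reduceSub] at h1
    rw [h1]
    simp only [h, Matrix.one_apply_ne hxy]
    norm_num
    field_simp
    ring
  · have hxy : x ≠ y := by rintro rfl; simp at h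
    have h1 : (Finset.univ.filter fun z => G.dist x z = 1 ∧ G.dist y z = 1).card = 0 := by
      rw [Finset.card_eq_zero, Finset.filter_eq_empty_iff]
      rintro z - ⟨h2, h3⟩
      have ht := hc.dist_triangle (u := x) (v := z) (w := y)
      rw [G.dist_comm (u := z)] at ht
      omega
    rw [h1]
    simp only [h, Matrix.one_apply_ne hxy]
    norm_num
    field_simp
end

section
/- Let G be a distance-regular graph of diameter 3 with intersection array {k, b₁, b₂; 1, c₂, c₃}, with distinct adjacency eigenvalues k > θ₁ > θ₂ > θ₃, and let q ≠ 0. For 1 ≤ i < j ≤ 3 and l the unique element of {1,2,3}∖{i,j}, one has R_q(θ_i) = R_q(θ_j) if and only if θ_l = qc₂ − b₂ + a₃. -/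
open Matrix

variable {V : Type*} [Fintype V] [DecidableEq V]

/-- `R_q(θ) = −(1/(c₂q²))·((q²+q+1)c₂ − k + ((q+1)c₂ − a₁)θ + θ²)`, the `q`-distance
eigenvalue corresponding to a nontrivial adjacency eigenvalue `θ` (here `k = b 0`,
`a₁ = k - b 1 - c 1`). -/
noncomputable def Rq (b c : ℕ → ℕ) (q θ : ℝ) : ℝ :=
  -(1 / ((c 2 : ℝ) * q ^ 2)) *
    ((q ^ 2 + q + 1) * (c 2 : ℝ) - (b 0 : ℝ) + ((q + 1) * (c 2 : ℝ) - aInt b c 1) * θ + θ ^ 2)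


lemma aux_entry (G : SimpleGraph V) (j : ℕ) (x y : V) :
    (distM G j * distM G 1) x y
      = ((({z : V | G.Adj y z ∧ G.dist x z = j} : Set V).ncard : ℕ) : ℝ) := by
  classical
  rw [Set.ncard_eq_toFinset_card', Matrix.mul_apply, Set.toFinset_setOf, Finset.card_filter]
  push_cast
  refine Finset.sum_congr rfl fun z _ => ?_
  simp only [distM, Matrix.of_apply, SimpleGraph.dist_eq_one_iff_adj, G.adj_comm z y]
  by_cases h1 : G.Adj y z <;> by_cases h2 : G.dist x z = j <;> simp [h1, h2]

lemma aux_c2 (G : SimpleGraph V) (b c : ℕ → ℕ) (hG : IsDRG G 3 b c) : c 2 ≠ 0 := by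
  obtain ⟨hc, -, ⟨x, y, hxy⟩, -, h⟩ := hG
  obtain ⟨p, hp⟩ := hc.exists_walk_length_eq_dist x y
  rw [hxy] at hp
  cases p with
  | nil => simp at hp
  | @cons _ u _ h1 p =>
  cases p with
  | nil => simp at hp
  | @cons _ v _ h2 p =>
  cases p with
  | nil => simp at hp
  | @cons _ w _ h3 p =>
  cases p with
  | cons h4 p => simp at hp
  | nil =>
  have e1 := SimpleGraph.dist_eq_one_iff_adj.2 h1
  have e2 := SimpleGraph.dist_eq_one_iff_adj.2 h2
  have e3 := SimpleGraph.dist_eq_one_iff_adj.2 h3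
  have t1 := hc.dist_triangle (u := x) (v := v) (w := y)
  have t2 := hc.dist_triangle (u := x) (v := u) (w := v)
  have e : G.dist x v = 2 := by omega
  have := (h 2 (by norm_num) x v e).1
  rw [← this]
  intro h0
  rw [Set.ncard_eq_zero] at h0
  have : u ∈ ({z : V | G.Adj v z ∧ G.dist x z = 2 - 1} : Set V) := ⟨h2.symm, by simpa using e1⟩
  rw [h0] at this
  exact this

lemma aux_val (G : SimpleGraph V) (b c : ℕ → ℕ) (hG : IsDRG G 3 b c) (j : ℕ) (x y : V) :
    (distM G j * distM G 1) x y =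
      if j + 1 = G.dist x y then (c (j+1) : ℝ) else
      if j = G.dist x y then aInt b c j else
      if j = G.dist x y + 1 then (b (j-1) : ℝ) else 0 := by
  classical
  rw [aux_entry]
  obtain ⟨hc, hle, -, -, h⟩ := hG
  have hd := h _ (hle x y) x y rfl
  have hk := (h 0 (by norm_num) y y (by simp)).2
  have tri : ∀ z, G.Adj y z → G.dist x z ≤ G.dist x y + 1 ∧ G.dist x y ≤ G.dist x z + 1 := by
    intro z hz
    have e1 := SimpleGraph.dist_eq_one_iff_adj.2 hz
    have e2 := SimpleGraph.dist_eq_one_iff_adj.2 hz.symm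
    have t1 := hc.dist_triangle (u := x) (v := y) (w := z)
    have t2 := hc.dist_triangle (u := x) (v := z) (w := y)
    omega
  split_ifs with h1 h2 h3
  · rw [← h1] at hd
    simpa using hd.1
  · subst h2
    unfold aInt
    rw [← hd.1, ← hd.2, ← hk]
    have key : ({z : V | G.Adj y z ∧ G.dist y z = 0 + 1} : Set V)
       = ({z : V | G.Adj y z ∧ G.dist x z = G.dist x y} : Set V) ∪
         (({z : V | G.Adj y z ∧ G.dist x z = G.dist x y + 1} : Set V) ∪
          ({z : V | G.Adj y z ∧ G.dist x z = G.dist x y - 1} : Set V)) := by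
      ext z
      simp only [Set.mem_setOf_eq, Set.mem_union, zero_add, SimpleGraph.dist_eq_one_iff_adj]
      constructor
      · rintro ⟨hz, -⟩
        have := tri z hz
        simp only [hz, true_and]
        omega
      · tauto
    by_cases h0 : G.dist x y = 0
    · have hx : x = y := hc.dist_eq_zero_iff.1 h0
      subst hx
      have : ({z : V | G.Adj x z ∧ G.dist x z = 0} : Set V) = ∅ := by
        ext z
        simp only [Set.mem_setOf_eq, Set.mem_empty_iff_false, iff_false, not_and]
        intro hz
        rw [SimpleGraph.dist_eq_one_iff_adj.2 hz]
        norm_num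
      rw [h0]
      simp only [Nat.zero_sub, this]
      simp
    · rw [key, Set.ncard_union_eq, Set.ncard_union_eq]
      · push_cast; ring
      · rw [Set.disjoint_left]
        rintro z ⟨_, hz⟩ ⟨_, hz'⟩
        omega
      · rw [Set.disjoint_left]
        rintro z ⟨_, hz⟩ (⟨_, hz'⟩ | ⟨_, hz'⟩) <;> omega
  · subst h3
    simpa using hd.2
  · have : ({z : V | G.Adj y z ∧ G.dist x z = j} : Set V) = ∅ := by
      ext z
      simp only [Set.mem_setOf_eq, Set.mem_empty_iff_false, iff_false, not_and]
      intro hz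
      have := tri z hz
      omega
    simp [this]

lemma aux_root (G : SimpleGraph V) (b c : ℕ → ℕ) (hG : IsDRG G 3 b c) (t : ℝ)
    (ht : t ∈ spectrum ℝ (distM G 1)) :
    (t - aInt b c 3) * ((t - aInt b c 2) * (t^2 - aInt b c 1 * t - b 0) - b 1 * c 2 * t)
      - b 2 * c 3 * (t^2 - aInt b c 1 * t - b 0) = 0 := by
  have hle := hG.2.1
  have E1 : distM G 1 * distM G 1
      = (b 0 : ℝ) • (1 : Matrix V V ℝ) + aInt b c 1 • distM G 1 + (c 2 : ℝ) • distM G 2 := by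
    ext x y
    rw [aux_val G b c hG]
    have h0 : (1 : Matrix V V ℝ) x y = if G.dist x y = 0 then 1 else 0 := by
      rw [Matrix.one_apply]; simp only [hG.1.dist_eq_zero_iff]
    have := hle x y
    simp only [Matrix.add_apply, Matrix.smul_apply, h0, distM, Matrix.of_apply]
    generalize G.dist x y = d at *
    interval_cases d <;> simp
  have E2 : distM G 2 * distM G 1
      = (b 1 : ℝ) • distM G 1 + aInt b c 2 • distM G 2 + (c 3 : ℝ) • distM G 3 := by
    ext x y
    rw [aux_val G b c hG]
    have := hle x y
    simp only [Matrix.add_apply, Matrix.smul_apply, distM, Matrix.of_apply]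
    generalize G.dist x y = d at *
    interval_cases d <;> simp
  have E3 : distM G 3 * distM G 1
      = (b 2 : ℝ) • distM G 2 + aInt b c 3 • distM G 3 := by
    ext x y
    rw [aux_val G b c hG]
    have := hle x y
    simp only [Matrix.add_apply, Matrix.smul_apply, distM, Matrix.of_apply]
    generalize G.dist x y = d at *
    interval_cases d <;> simp
  rw [← Matrix.spectrum_toLin', ← Module.End.hasEigenvalue_iff_mem_spectrum] at ht
  obtain ⟨v, hv⟩ := ht.exists_hasEigenvector
  have hv1 : distM G 1 *ᵥ v = t • v := by simpa using hv.apply_eq_smul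
  obtain ⟨w, hw⟩ := Function.ne_iff.1 hv.2
  have F1 := congrFun (congrArg (fun M => M *ᵥ v) E1) w
  have F2 := congrFun (congrArg (fun M => M *ᵥ v) E2) w
  have F3 := congrFun (congrArg (fun M => M *ᵥ v) E3) w
  simp only [← Matrix.mulVec_mulVec, hv1, Matrix.mulVec_smul, Matrix.add_mulVec,
    Matrix.smul_mulVec, Matrix.one_mulVec, Pi.add_apply, Pi.smul_apply, smul_eq_mul] at F1 F2 F3
  generalize (distM G 2 *ᵥ v) w = v2 at *
  generalize (distM G 3 *ᵥ v) w = v3 at *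
  have hw' : v w ≠ 0 := hw
  apply mul_right_cancel₀ hw'
  linear_combination ((t - aInt b c 3) * (t - aInt b c 2) - b 2 * c 3) * F1
    + (t - aInt b c 3) * c 2 * F2 + c 2 * c 3 * F3

lemma aux_vieta (s e f g x y z w : ℝ) (hxy : x ≠ y) (hxz : x ≠ z) (hxw : x ≠ w)
    (hyz : y ≠ z) (hyw : y ≠ w) (hzw : z ≠ w)
    (hx : x^4 - s*x^3 + e*x^2 + f*x + g = 0) (hy : y^4 - s*y^3 + e*y^2 + f*y + g = 0)
    (hz : z^4 - s*z^3 + e*z^2 + f*z + g = 0) (hw : w^4 - s*w^3 + e*w^2 + f*w + g = 0) :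
    x + y + z + w = s := by
  have A : ∀ u, x ≠ u → u^4 - s*u^3 + e*u^2 + f*u + g = 0 →
      (x^3 + x^2*u + x*u^2 + u^3) - s*(x^2+x*u+u^2) + e*(x+u) + f = 0 := by
    intro u hu h
    apply mul_left_cancel₀ (sub_ne_zero.2 hu)
    linear_combination hx - h
  have Ay := A y hxy hy
  have Az := A z hxz hz
  have Aw := A w hxw hw
  have B : ∀ u, y ≠ u → (x^3 + x^2*u + x*u^2 + u^3) - s*(x^2+x*u+u^2) + e*(x+u) + f = 0 →
      (x^2 + x*(y+u) + y^2 + y*u + u^2) - s*(x+y+u) + e = 0 := by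
    intro u hu h
    apply mul_left_cancel₀ (sub_ne_zero.2 hu)
    linear_combination Ay - h
  have Bz := B z hyz Az
  have Bw := B w hyw Aw
  apply mul_left_cancel₀ (sub_ne_zero.2 hzw)
  linear_combination Bz - Bw

lemma aux_R (b c : ℕ → ℕ) (q x y : ℝ) (hq : q ≠ 0) (hc : c 2 ≠ 0) (hxy : x ≠ y) :
    Rq b c q x = Rq b c q y ↔ x + y = aInt b c 1 - (q + 1) * c 2 := by
  have hc' : (c 2 : ℝ) ≠ 0 := by exact_mod_cast hc
  have hn : -(1 / ((c 2 : ℝ) * q ^ 2)) ≠ 0 := by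
    simp [hq, hc]
  unfold Rq
  rw [mul_right_inj' hn]
  constructor
  · intro h
    apply mul_left_cancel₀ (sub_ne_zero.2 hxy)
    linear_combination h
  · intro h
    linear_combination (x - y) * h

/-- Proposition 3.3: for a distance-regular graph of diameter 3 with
intersection array `{k, b₁, b₂; 1, c₂, c₃}`, distinct adjacency eigenvalues
`k > θ₁ > θ₂ > θ₃` and `q ≠ 0`: for `1 ≤ i < j ≤ 3` and `l` the remaining index,
`R_q(θ_i) = R_q(θ_j) ↔ θ_l = qc₂ − b₂ + a₃`. -/
theorem stmt5 (G : SimpleGraph V) (b c : ℕ → ℕ) (hG : IsDRG G 3 b c)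
    (θ₁ θ₂ θ₃ : ℝ) (h1 : (b 0 : ℝ) > θ₁) (h2 : θ₁ > θ₂) (h3 : θ₂ > θ₃)
    (hspec : spectrum ℝ (distM G 1) = ({(b 0 : ℝ), θ₁, θ₂, θ₃} : Set ℝ))
    (q : ℝ) (hq : q ≠ 0) :
    (Rq b c q θ₁ = Rq b c q θ₂ ↔ θ₃ = q * (c 2 : ℝ) - (b 2 : ℝ) + aInt b c 3) ∧
    (Rq b c q θ₁ = Rq b c q θ₃ ↔ θ₂ = q * (c 2 : ℝ) - (b 2 : ℝ) + aInt b c 3) ∧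
    (Rq b c q θ₂ = Rq b c q θ₃ ↔ θ₁ = q * (c 2 : ℝ) - (b 2 : ℝ) + aInt b c 3) := by
  have hc := aux_c2 G b c hG
  have R := fun t ht => aux_root G b c hG t ht
  rw [hspec] at R
  have r0 := R (b 0) (by simp)
  have r1 := R θ₁ (by simp)
  have r2 := R θ₂ (by simp)
  have r3 := R θ₃ (by simp)
  have S := aux_vieta (aInt b c 1 + aInt b c 2 + aInt b c 3)
    (aInt b c 1 * aInt b c 2 + aInt b c 3 * (aInt b c 1 + aInt b c 2) - b 0 - b 1 * c 2 - b 2 * c 3)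
    (aInt b c 2 * b 0 - aInt b c 3 * (aInt b c 1 * aInt b c 2 - b 0 - b 1 * c 2)
      + b 2 * c 3 * aInt b c 1)
    (- aInt b c 3 * aInt b c 2 * b 0 + b 2 * c 3 * b 0)
    (b 0) θ₁ θ₂ θ₃ (by linarith) (by intro h; linarith) (by intro h; linarith)
    (by linarith) (by intro h; linarith) (by linarith)
    (by linear_combination r0) (by linear_combination r1)
    (by linear_combination r2) (by linear_combination r3)
  have ha2 : aInt b c 2 = b 0 - b 2 - c 2 := rfl
  rw [aux_R b c q _ _ hq hc h2.ne', aux_R b c q _ _ hq hc (h3.trans h2).ne',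
    aux_R b c q _ _ hq hc h3.ne']
  refine ⟨⟨fun h => ?_, fun h => ?_⟩, ⟨fun h => ?_, fun h => ?_⟩, ⟨fun h => ?_, fun h => ?_⟩⟩ <;>
    linarith
end

section
/- Let G be a distance-regular graph of diameter 3 with intersection array {k, b₁, b₂; 1, c₂, c₃} and distinct adjacency eigenvalues k > θ₁ > θ₂ > θ₃. Then the distance matrix 𝔻₁ of G has exactly 3 distinct eigenvalues if and only if c₂ + a₃ − b₂ ∈ {θ₁, θ₂, θ₃}. -/
open Matrix

variable {V : Type*} [Fintype V] [DecidableEq V]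

theorem mem_spec_iff (M : Matrix V V ℝ) (μ : ℝ) :
    μ ∈ spectrum ℝ M ↔ ∃ v : V → ℝ, v ≠ 0 ∧ M *ᵥ v = μ • v := by
  rw [← Matrix.spectrum_toLin', ← Module.End.hasEigenvalue_iff_mem_spectrum]
  constructor
  · intro h
    obtain ⟨v, hv⟩ := h.exists_hasEigenvector
    exact ⟨v, hv.2, by simpa using hv.apply_eq_smul⟩
  · rintro ⟨v, hv, h⟩
    exact Module.End.hasEigenvalue_of_hasEigenvector (x := v)
      ⟨Module.End.mem_eigenspace_iff.2 (by simpa using h), hv⟩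

theorem cnt_eq (G : SimpleGraph V) (i : ℕ) (x z : V) :
    (distM G i * distM G 1) x z = (({y : V | G.Adj z y ∧ G.dist x y = i} : Set V).ncard : ℝ) := by
  classical
  rw [Set.ncard_eq_toFinset_card', Matrix.mul_apply]
  simp only [distM, Matrix.of_apply, SimpleGraph.dist_eq_one_iff_adj, ← ite_and, mul_ite, mul_one,
    mul_zero, Set.toFinset_setOf]
  rw [Finset.sum_boole]
  congr 2
  ext y
  simp [G.adj_comm y z]

theorem dist_tri (G : SimpleGraph V) (hc : G.Connected) (x y z : V) (h : G.Adj z y) :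
    G.dist x y ≤ G.dist x z + 1 ∧ G.dist x z ≤ G.dist x y + 1 := by
  have h1 := hc.dist_triangle (u := x) (v := z) (w := y)
  have h2 := hc.dist_triangle (u := x) (v := y) (w := z)
  rw [SimpleGraph.dist_eq_one_iff_adj.2 h] at h1
  rw [SimpleGraph.dist_eq_one_iff_adj.2 h.symm] at h2
  exact ⟨h1, h2⟩

theorem cnt_zero (G : SimpleGraph V) (hc : G.Connected) (i : ℕ) (x z : V)
    (h : G.dist x z + 1 < i ∨ i + 1 < G.dist x z) :
    (distM G i * distM G 1) x z = 0 := by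
  rw [cnt_eq]
  have : ({y : V | G.Adj z y ∧ G.dist x y = i} : Set V) = ∅ := by
    ext y
    simp only [Set.mem_setOf_eq, Set.mem_empty_iff_false, iff_false, not_and]
    intro hy
    have := dist_tri G hc x y z hy
    omega
  rw [this]; simp

theorem row_sum {G : SimpleGraph V} {b c : ℕ → ℕ} (hG : IsDRG G 3 b c) (z : V) :
    ∑ y, distM G 1 y z = (b 0 : ℝ) := by
  classical
  obtain ⟨hc, -, -, -, h⟩ := hG
  have := (h 0 (by norm_num) z z (by simp)).2
  rw [← this, Set.ncard_eq_toFinset_card']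
  simp only [distM, Matrix.of_apply, zero_add, SimpleGraph.dist_eq_one_iff_adj, and_self,
    Set.toFinset_setOf]
  rw [Finset.sum_boole]
  congr 2
  ext y
  simp [G.adj_comm y z]

theorem cnt_a {G : SimpleGraph V} {b c : ℕ → ℕ} (hG : IsDRG G 3 b c) (x z : V) (i : ℕ)
    (hi : i + 1 ≤ 3)
    (hd : G.dist x z = i + 1) : (distM G (i+1) * distM G 1) x z = aInt b c (i+1) := by
  have hr := row_sum hG z
  obtain ⟨hc, -, -, -, h⟩ := hG
  obtain ⟨h1, h2⟩ := h (i+1) hi x z hd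
  simp only [Nat.add_sub_cancel] at h1
  have e1 := cnt_eq G i x z
  have e2 := cnt_eq G (i+1+1) x z
  rw [h1] at e1
  rw [h2] at e2
  have key : (distM G i * distM G 1) x z + (distM G (i+1) * distM G 1) x z
      + (distM G (i+1+1) * distM G 1) x z = ∑ y, distM G 1 y z := by
    simp only [Matrix.mul_apply]
    rw [← Finset.sum_add_distrib, ← Finset.sum_add_distrib]
    refine Finset.sum_congr rfl fun y _ => ?_
    simp only [distM, Matrix.of_apply]
    by_cases hy : G.dist y z = 1
    · have := dist_tri G hc x y z (SimpleGraph.dist_eq_one_iff_adj.1 hy).symm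
      have h3 : G.dist x y = i ∨ G.dist x y = i + 1 ∨ G.dist x y = i+1+1 := by omega
      rcases h3 with h3 | h3 | h3 <;> simp [h3, hy] <;> omega
    · simp [hy]
  unfold aInt
  linarith

theorem A_sq {G : SimpleGraph V} {b c : ℕ → ℕ} (hG : IsDRG G 3 b c) :
    distM G 1 * distM G 1 = (b 0 : ℝ) • (1 : Matrix V V ℝ) + aInt b c 1 • distM G 1
      + (c 2 : ℝ) • distM G 2 := by
  ext x z
  have hG' := hG
  obtain ⟨hc, hle, -, -, h⟩ := hG'
  have hj := hle x z
  have h1 : (1 : Matrix V V ℝ) x z = if G.dist x z = 0 then 1 else 0 := by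
    rw [Matrix.one_apply]; simp [hc.dist_eq_zero_iff]
  simp only [Matrix.add_apply, Matrix.smul_apply, h1, smul_eq_mul]
  have hj' : G.dist x z = 0 ∨ G.dist x z = 1 ∨ G.dist x z = 2 ∨ G.dist x z = 3 := by omega
  rcases hj' with e | e | e | e
  · rw [cnt_eq]; have := (h 0 (by norm_num) x z e).2; simp only [zero_add] at this
    rw [this]; simp [distM, e]
  · rw [cnt_a hG x z 0 (by norm_num) e]; simp [distM, e]
  · rw [cnt_eq]; have := (h 2 (by norm_num) x z e).1; simp only [Nat.add_one_sub_one] at this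
    rw [this]; simp [distM, e]
  · rw [cnt_zero G hc _ _ _ (by omega)]; simp [distM, e]

theorem A3_mul {G : SimpleGraph V} {b c : ℕ → ℕ} (hG : IsDRG G 3 b c) :
    distM G 3 * distM G 1 = (b 2 : ℝ) • distM G 2 + aInt b c 3 • distM G 3 := by
  ext x z
  have hG' := hG
  obtain ⟨hc, hle, -, -, h⟩ := hG'
  have hj := hle x z
  simp only [Matrix.add_apply, Matrix.smul_apply, smul_eq_mul]
  have hj' : G.dist x z = 0 ∨ G.dist x z = 1 ∨ G.dist x z = 2 ∨ G.dist x z = 3 := by omega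
  rcases hj' with e | e | e | e
  · rw [cnt_zero G hc _ _ _ (by omega)]; simp [distM, e]
  · rw [cnt_zero G hc _ _ _ (by omega)]; simp [distM, e]
  · rw [cnt_eq]; have := (h 2 (by norm_num) x z e).2; norm_num at this
    rw [this]; simp [distM, e]
  · rw [cnt_a hG x z 2 (by norm_num) e]; simp [distM, e]

theorem qDist_apply {G : SimpleGraph V} {b c : ℕ → ℕ} (hG : IsDRG G 3 b c) (x z : V) :
    qDist G 3 1 x z = (G.dist x z : ℝ) := by
  have hj := hG.2.1 x z
  have : Finset.Icc 1 3 = {1, 2, 3} := by decide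
  have hj' : G.dist x z = 0 ∨ G.dist x z = 1 ∨ G.dist x z = 2 ∨ G.dist x z = 3 := by omega
  rcases hj' with e | e | e | e <;> simp [qDist, this, distM, e, Matrix.add_apply]

theorem A3_eq {G : SimpleGraph V} {b c : ℕ → ℕ} (hG : IsDRG G 3 b c) :
    distM G 3 = Matrix.of (fun _ _ => (1 : ℝ)) - 1 - distM G 1 - distM G 2 := by
  ext x z
  have hj := hG.2.1 x z
  have h1 : (1 : Matrix V V ℝ) x z = if G.dist x z = 0 then 1 else 0 := by
    rw [Matrix.one_apply]; simp [hG.1.dist_eq_zero_iff]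
  have hj' : G.dist x z = 0 ∨ G.dist x z = 1 ∨ G.dist x z = 2 ∨ G.dist x z = 3 := by omega
  rcases hj' with e | e | e | e <;> simp [distM, e, h1]

theorem D_eq {G : SimpleGraph V} {b c : ℕ → ℕ} (hG : IsDRG G 3 b c) :
    qDist G 3 1 = (3 : ℝ) • Matrix.of (fun _ _ => (1 : ℝ)) - (3 : ℝ) • (1 : Matrix V V ℝ)
      - (2 : ℝ) • distM G 1 - distM G 2 := by
  ext x z
  rw [qDist_apply hG]
  have hj := hG.2.1 x z
  have h1 : (1 : Matrix V V ℝ) x z = if G.dist x z = 0 then 1 else 0 := by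
    rw [Matrix.one_apply]; simp [hG.1.dist_eq_zero_iff]
  have hj' : G.dist x z = 0 ∨ G.dist x z = 1 ∨ G.dist x z = 2 ∨ G.dist x z = 3 := by omega
  rcases hj' with e | e | e | e <;> simp [distM, e, h1] <;> norm_num

theorem J_mulVec (u : V → ℝ) (hu : ∑ x, u x = 0) :
    (Matrix.of (fun _ _ => (1 : ℝ)) : Matrix V V ℝ) *ᵥ u = 0 := by
  ext x; simp [Matrix.mulVec, dotProduct, hu]

theorem sum_A {G : SimpleGraph V} {b c : ℕ → ℕ} (hG : IsDRG G 3 b c) (u : V → ℝ) :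
    ∑ x, (distM G 1 *ᵥ u) x = (b 0 : ℝ) * ∑ x, u x := by
  simp only [Matrix.mulVec, dotProduct]
  rw [Finset.sum_comm, Finset.mul_sum]
  refine Finset.sum_congr rfl fun z _ => ?_
  rw [← Finset.sum_mul, row_sum hG]

/-- facts on vectors -/
theorem A_sq_vec {G : SimpleGraph V} {b c : ℕ → ℕ} (hG : IsDRG G 3 b c) (u : V → ℝ) :
    distM G 1 *ᵥ (distM G 1 *ᵥ u) = (b 0 : ℝ) • u + aInt b c 1 • (distM G 1 *ᵥ u)
      + (c 2 : ℝ) • (distM G 2 *ᵥ u) := by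
  rw [Matrix.mulVec_mulVec, A_sq hG]
  simp [Matrix.add_mulVec, Matrix.smul_mulVec]

theorem A3_vec {G : SimpleGraph V} {b c : ℕ → ℕ} (hG : IsDRG G 3 b c) (u : V → ℝ)
    (hu : ∑ x, u x = 0) :
    distM G 3 *ᵥ u = - u - distM G 1 *ᵥ u - distM G 2 *ᵥ u := by
  rw [A3_eq hG]
  simp [Matrix.sub_mulVec, J_mulVec u hu]

theorem D_vec {G : SimpleGraph V} {b c : ℕ → ℕ} (hG : IsDRG G 3 b c) (u : V → ℝ)
    (hu : ∑ x, u x = 0) :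
    qDist G 3 1 *ᵥ u = - (3 : ℝ) • u - (2 : ℝ) • (distM G 1 *ᵥ u) - distM G 2 *ᵥ u := by
  rw [D_eq hG]
  simp only [Matrix.sub_mulVec, Matrix.smul_mulVec, J_mulVec u hu, Matrix.one_mulVec, smul_zero,
    zero_sub, neg_smul]

theorem A3A_vec {G : SimpleGraph V} {b c : ℕ → ℕ} (hG : IsDRG G 3 b c) (u : V → ℝ) :
    distM G 3 *ᵥ (distM G 1 *ᵥ u) = (b 2 : ℝ) • (distM G 2 *ᵥ u)
      + aInt b c 3 • (distM G 3 *ᵥ u) := by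
  rw [Matrix.mulVec_mulVec, A3_mul hG]
  simp [Matrix.add_mulVec, Matrix.smul_mulVec]

/-- cubic relation for sum-zero vectors -/
theorem cubic_vec {G : SimpleGraph V} {b c : ℕ → ℕ} (hG : IsDRG G 3 b c) (u : V → ℝ)
    (hu : ∑ x, u x = 0) (x : V) :
    (distM G 1 *ᵥ (distM G 1 *ᵥ (distM G 1 *ᵥ u))) x
      + ((c 2 : ℝ) - aInt b c 1 - aInt b c 3 + b 2) * (distM G 1 *ᵥ (distM G 1 *ᵥ u)) x
      + ((c 2 : ℝ) - b 0 - aInt b c 3 * (c 2 - aInt b c 1) - b 2 * aInt b c 1)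
        * (distM G 1 *ᵥ u) x
      + (- aInt b c 3 * (c 2 - b 0) - b 2 * b 0) * u x = 0 := by
  have hu' : ∑ x, (distM G 1 *ᵥ u) x = 0 := by rw [sum_A hG, hu, mul_zero]
  have e1 := congrFun (A_sq_vec hG u) x
  have e2 := congrFun (A_sq_vec hG (distM G 1 *ᵥ u)) x
  have e3 := congrFun (A3_vec hG u hu) x
  have e4 := congrFun (A3_vec hG _ hu') x
  have e5 := congrFun (A3A_vec hG u) x
  simp only [Pi.add_apply, Pi.sub_apply, Pi.smul_apply, Pi.neg_apply, smul_eq_mul] at e1 e2 e3 e4 e5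
  rw [e4, e3] at e5
  linear_combination e2 + (- aInt b c 3 + b 2) * e1 - (c 2 : ℝ) * e5

theorem D_symm (G : SimpleGraph V) {b c : ℕ → ℕ} (hG : IsDRG G 3 b c) (x y : V) :
    qDist G 3 1 x y = qDist G 3 1 y x := by
  rw [qDist_apply hG, qDist_apply hG, SimpleGraph.dist_comm]

theorem distM_symm (G : SimpleGraph V) (i : ℕ) (x y : V) :
    distM G i x y = distM G i y x := by
  simp [distM, SimpleGraph.dist_comm]

theorem A_one {G : SimpleGraph V} {b c : ℕ → ℕ} (hG : IsDRG G 3 b c) :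
    distM G 1 *ᵥ (fun _ => (1 : ℝ)) = (b 0 : ℝ) • (fun _ => (1 : ℝ)) := by
  ext x
  have := row_sum hG x
  simp only [Matrix.mulVec, dotProduct, mul_one, Pi.smul_apply, smul_eq_mul]
  rw [← this]
  exact Finset.sum_congr rfl fun y _ => distM_symm G 1 x y

theorem D_one {G : SimpleGraph V} {b c : ℕ → ℕ} (hG : IsDRG G 3 b c) (hc2 : (c 2 : ℝ) ≠ 0) :
    ∃ s : ℝ, ∀ x, ∑ y, qDist G 3 1 x y = s := by
  refine ⟨3 * (Fintype.card V : ℝ) - 3 - 2 * b 0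
    - ((b 0 : ℝ) * b 0 - b 0 - aInt b c 1 * b 0) / c 2, fun x => ?_⟩
  have e1 := congrFun (A_sq_vec hG (fun _ => 1)) x
  rw [A_one hG, Matrix.mulVec_smul, A_one hG] at e1
  have e2 := congrFun (congrArg (fun M => M *ᵥ (fun _ => (1 : ℝ))) (D_eq hG)) x
  simp only [Matrix.sub_mulVec, Matrix.smul_mulVec, A_one hG, Matrix.one_mulVec] at e2
  simp only [Pi.add_apply, Pi.sub_apply, Pi.smul_apply, smul_eq_mul, mul_one] at e1 e2
  have e3 : (qDist G 3 1 *ᵥ (fun _ => (1 : ℝ))) x = ∑ y, qDist G 3 1 x y := by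
    simp [Matrix.mulVec, dotProduct]
  have e4 : ((Matrix.of (fun _ _ => (1 : ℝ)) : Matrix V V ℝ) *ᵥ (fun _ => (1 : ℝ))) x
      = (Fintype.card V : ℝ) := by
    simp [Matrix.mulVec, dotProduct]
  rw [← e3, e2, e4]
  field_simp
  linarith

theorem sum_D {G : SimpleGraph V} {b c : ℕ → ℕ} (hG : IsDRG G 3 b c) (s : ℝ)
    (hs : ∀ x, ∑ y, qDist G 3 1 x y = s) (u : V → ℝ) :
    ∑ x, (qDist G 3 1 *ᵥ u) x = s * ∑ x, u x := by
  simp only [Matrix.mulVec, dotProduct]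
  rw [Finset.sum_comm, Finset.mul_sum]
  refine Finset.sum_congr rfl fun z _ => ?_
  rw [← Finset.sum_mul, ← hs z]
  congr 1
  exact Finset.sum_congr rfl fun y _ => D_symm G hG y z

theorem perron {G : SimpleGraph V} {b c : ℕ → ℕ} (hG : IsDRG G 3 b c) (s : ℝ)
    (hs : ∀ x, ∑ y, qDist G 3 1 x y = s) (u : V → ℝ) (hu : ∑ x, u x = 0)
    (h : qDist G 3 1 *ᵥ u = s • u) : u = 0 := by
  haveI : Nonempty V := hG.1.nonempty
  obtain ⟨x, hx⟩ := Finite.exists_max u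
  have e := congrFun h x
  simp only [Matrix.mulVec, dotProduct, Pi.smul_apply, smul_eq_mul] at e
  have e0 : ∑ y, qDist G 3 1 x y * (u x - u y) = 0 := by
    simp only [mul_sub, Finset.sum_sub_distrib]
    rw [← Finset.sum_mul, hs x, e, sub_self]
  rw [Finset.sum_eq_zero_iff_of_nonneg] at e0
  · have hcst : ∀ y, u y = u x := by
      intro y
      by_cases hxy : x = y
      · rw [hxy]
      have := e0 y (Finset.mem_univ _)
      rw [qDist_apply hG] at this
      rcases mul_eq_zero.1 this with h0 | h0
      · exact absurd (hG.1.dist_eq_zero_iff.1 (by exact_mod_cast h0)) hxy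
      · linarith
    have h2 : (Fintype.card V : ℝ) * u x = 0 := by
      rw [← hu, Finset.sum_congr rfl fun y _ => hcst y]; simp
    have h3 : u x = 0 := by
      rcases mul_eq_zero.1 h2 with h0 | h0
      · simp at h0
      · exact h0
    ext y; rw [hcst y, h3]; rfl
  · intro y _
    rw [qDist_apply hG]
    exact mul_nonneg (Nat.cast_nonneg _) (sub_nonneg.2 (hx y))

theorem scal_of_vec {u : V → ℝ} (hu : u ≠ 0) {r : ℝ} (h : ∀ x, r * u x = 0) : r = 0 := by
  obtain ⟨x, hx⟩ := Function.ne_iff.1 hu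
  exact (mul_eq_zero.1 (h x)).resolve_right hx

/-- the distance eigenvalue times `c₂` -/
theorem D_vec_eig {G : SimpleGraph V} {b c : ℕ → ℕ} (hG : IsDRG G 3 b c) (hc2 : (c 2 : ℝ) ≠ 0)
    (u : V → ℝ) (hu : ∑ x, u x = 0) (t : ℝ) (ht : distM G 1 *ᵥ u = t • u) :
    qDist G 3 1 *ᵥ u = (-3 - 2 * t - (t ^ 2 - aInt b c 1 * t - b 0) / c 2) • u := by
  ext x
  have e1 := congrFun (A_sq_vec hG u) x
  have e2 := congrFun (D_vec hG u hu) x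
  rw [ht, Matrix.mulVec_smul, ht] at e1
  rw [ht] at e2
  simp only [Pi.add_apply, Pi.sub_apply, Pi.smul_apply, smul_eq_mul] at e1 e2 ⊢
  rw [e2]
  field_simp
  linear_combination e1

theorem D_comm {G : SimpleGraph V} {b c : ℕ → ℕ} (hG : IsDRG G 3 b c) (hc2 : (c 2 : ℝ) ≠ 0)
    (u : V → ℝ) (hu : ∑ x, u x = 0) (μ : ℝ) (h : qDist G 3 1 *ᵥ u = μ • u) :
    qDist G 3 1 *ᵥ (distM G 1 *ᵥ u) = μ • (distM G 1 *ᵥ u) := by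
  have hu' : ∑ x, (distM G 1 *ᵥ u) x = 0 := by rw [sum_A hG, hu, mul_zero]
  have e2 := D_vec hG u hu
  have e0 := congrArg (fun w => distM G 1 *ᵥ w) (e2.symm.trans h)
  have e1 := congrArg (fun w => distM G 1 *ᵥ w) (A_sq_vec hG u)
  simp only [Matrix.mulVec_sub, Matrix.mulVec_add, Matrix.mulVec_smul] at e0 e1
  ext x
  have f0 := congrFun e0 x
  have f1 := congrFun e1 x
  have f2 := congrFun (A_sq_vec hG (distM G 1 *ᵥ u)) x
  have f3 := congrFun (D_vec hG _ hu') x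
  simp only [Pi.add_apply, Pi.sub_apply, Pi.smul_apply, smul_eq_mul] at f0 f1 f2 f3 ⊢
  have f4 : (distM G 2 *ᵥ (distM G 1 *ᵥ u)) x = (distM G 1 *ᵥ (distM G 2 *ᵥ u)) x := by
    apply mul_left_cancel₀ hc2
    linarith
  rw [f3, f4, f0]

theorem step {G : SimpleGraph V} {b c : ℕ → ℕ} (hG : IsDRG G 3 b c) (hc2 : (c 2 : ℝ) ≠ 0)
    (u : V → ℝ) (hu : ∑ x, u x = 0) (μ : ℝ) (h : qDist G 3 1 *ᵥ u = μ • u) (t : ℝ) :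
    ∑ x, (distM G 1 *ᵥ u - t • u) x = 0 ∧
    qDist G 3 1 *ᵥ (distM G 1 *ᵥ u - t • u) = μ • (distM G 1 *ᵥ u - t • u) := by
  constructor
  · simp only [Pi.sub_apply, Pi.smul_apply, smul_eq_mul, Finset.sum_sub_distrib]
    rw [sum_A hG, ← Finset.mul_sum, hu]; simp
  · rw [Matrix.mulVec_sub, D_comm hG hc2 u hu μ h, Matrix.mulVec_smul, h, smul_sub, smul_comm]

theorem eig_of {G : SimpleGraph V} {b c : ℕ → ℕ} (hG : IsDRG G 3 b c) (hc2 : (c 2 : ℝ) ≠ 0)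
    (u : V → ℝ) (hu0 : u ≠ 0) (hu : ∑ x, u x = 0) (μ : ℝ) (h : qDist G 3 1 *ᵥ u = μ • u) (t : ℝ)
    (ht : distM G 1 *ᵥ u - t • u = 0) :
    μ = -3 - 2 * t - (t ^ 2 - aInt b c 1 * t - b 0) / c 2 := by
  have h2 := D_vec_eig hG hc2 u hu t (sub_eq_zero.1 ht)
  rw [h] at h2
  exact smul_left_injective ℝ hu0 h2

theorem vieta {p q r x y z : ℝ} (hxy : x ≠ y) (hyz : y ≠ z) (hxz : x ≠ z)
    (hx : x ^ 3 + p * x ^ 2 + q * x + r = 0) (hy : y ^ 3 + p * y ^ 2 + q * y + r = 0)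
    (hz : z ^ 3 + p * z ^ 2 + q * z + r = 0) :
    p = -(x + y + z) ∧ q = x * y + y * z + x * z ∧ r = - (x * y * z) := by
  have h1 : x ^ 2 + x * y + y ^ 2 + p * (x + y) + q = 0 := by
    apply mul_left_cancel₀ (sub_ne_zero.2 hxy); linear_combination hx - hy
  have h2 : x ^ 2 + x * z + z ^ 2 + p * (x + z) + q = 0 := by
    apply mul_left_cancel₀ (sub_ne_zero.2 hxz); linear_combination hx - hz
  have h3 : x + y + z + p = 0 := by
    apply mul_left_cancel₀ (sub_ne_zero.2 hyz); linear_combination h1 - h2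
  have hp : p = -(x + y + z) := by linarith
  subst hp
  have hq : q = x * y + y * z + x * z := by linear_combination h1
  subst hq
  exact ⟨rfl, rfl, by linear_combination hx⟩

theorem ncard_lem {s f g h : ℝ} (h1 : s ≠ f) (h2 : s ≠ g) (h3 : s ≠ h)
    (hn : ¬ (f = g ∧ g = h)) :
    ({s, f, g, h} : Set ℝ).ncard = 3 ↔ f = g ∨ f = h ∨ g = h := by
  have key : ({s, f, g, h} : Set ℝ) = (({s, f, g, h} : Finset ℝ) : Set ℝ) := by simp
  rw [key, Set.ncard_coe_finset]
  by_cases e1 : f = g <;> by_cases e2 : f = h <;> by_cases e3 : g = h <;>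
    simp_all [Finset.card_insert_of_notMem]

/-- Corollary 3.7: a distance-regular graph of diameter 3 with
intersection array `{k, b₁, b₂; 1, c₂, c₃}` and distinct adjacency eigenvalues
`k > θ₁ > θ₂ > θ₃` has exactly 3 distinct distance eigenvalues if and only if
`c₂ + a₃ − b₂` is one of `θ₁, θ₂, θ₃`. -/
theorem stmt10 (G : SimpleGraph V) (b c : ℕ → ℕ) (hG : IsDRG G 3 b c)
    (θ₁ θ₂ θ₃ : ℝ) (h1 : (b 0 : ℝ) > θ₁) (h2 : θ₁ > θ₂) (h3 : θ₂ > θ₃)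
    (hspec : spectrum ℝ (distM G 1) = ({(b 0 : ℝ), θ₁, θ₂, θ₃} : Set ℝ)) :
    (spectrum ℝ (qDist G 3 1)).ncard = 3 ↔
      (c 2 : ℝ) + aInt b c 3 - (b 2 : ℝ) ∈ ({θ₁, θ₂, θ₃} : Set ℝ) := by
  -- eigenvectors of the adjacency matrix
  have eig : ∀ t : ℝ, t ∈ spectrum ℝ (distM G 1) → t ≠ b 0 →
      ∃ u : V → ℝ, u ≠ 0 ∧ distM G 1 *ᵥ u = t • u ∧ ∑ x, u x = 0 := by
    intro t ht htk
    obtain ⟨u, hu, h⟩ := (mem_spec_iff _ _).1 ht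
    refine ⟨u, hu, h, ?_⟩
    have h5 := sum_A hG u
    rw [h] at h5
    simp only [Pi.smul_apply, smul_eq_mul] at h5
    rw [← Finset.mul_sum] at h5
    have h6 : (t - b 0) * ∑ x, u x = 0 := by linarith
    exact (mul_eq_zero.1 h6).resolve_left (sub_ne_zero.2 htk)
  obtain ⟨u₁, hu₁, hA₁, hs₁⟩ := eig θ₁ (by rw [hspec]; simp) (by linarith)
  obtain ⟨u₂, hu₂, hA₂, hs₂⟩ := eig θ₂ (by rw [hspec]; simp) (by linarith)
  obtain ⟨u₃, hu₃, hA₃, hs₃⟩ := eig θ₃ (by rw [hspec]; simp) (by linarith)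
  have n12 : θ₁ ≠ θ₂ := by linarith
  have n23 : θ₂ ≠ θ₃ := by linarith
  have n13 : θ₁ ≠ θ₃ := by linarith
  have hc2 : (c 2 : ℝ) ≠ 0 := by
    intro h0
    have quad : ∀ (t : ℝ) (u : V → ℝ), u ≠ 0 → distM G 1 *ᵥ u = t • u →
        t ^ 2 - aInt b c 1 * t - b 0 = 0 := by
      intro t u hu ht
      refine scal_of_vec hu fun x => ?_
      have e1 := congrFun (A_sq_vec hG u) x
      rw [ht, Matrix.mulVec_smul, ht, h0] at e1
      simp only [Pi.add_apply, Pi.smul_apply, smul_eq_mul] at e1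
      linarith
    have q1 := quad _ _ hu₁ hA₁
    have q2 := quad _ _ hu₂ hA₂
    have q3 := quad _ _ hu₃ hA₃
    have r1 : θ₁ + θ₂ = aInt b c 1 := by
      apply mul_left_cancel₀ (sub_ne_zero.2 n12); linear_combination q1 - q2
    have r2 : θ₁ + θ₃ = aInt b c 1 := by
      apply mul_left_cancel₀ (sub_ne_zero.2 n13); linear_combination q1 - q3
    exact n23 (by linarith)
  have cub : ∀ (t : ℝ) (u : V → ℝ), u ≠ 0 → distM G 1 *ᵥ u = t • u → ∑ x, u x = 0 →
      t ^ 3 + ((c 2 : ℝ) - aInt b c 1 - aInt b c 3 + b 2) * t ^ 2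
      + ((c 2 : ℝ) - b 0 - aInt b c 3 * (c 2 - aInt b c 1) - b 2 * aInt b c 1) * t
      + (- aInt b c 3 * (c 2 - b 0) - b 2 * b 0) = 0 := by
    intro t u hu ht hs
    refine scal_of_vec hu fun x => ?_
    have e := cubic_vec hG u hs x
    simp only [ht, Matrix.mulVec_smul, Pi.smul_apply, smul_eq_mul] at e
    linear_combination e
  obtain ⟨vp, vq, vr⟩ := vieta n12 n23 n13 (cub _ _ hu₁ hA₁ hs₁) (cub _ _ hu₂ hA₂ hs₂)
    (cub _ _ hu₃ hA₃ hs₃)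
  obtain ⟨s, hs⟩ := D_one hG hc2
  obtain ⟨f, hf⟩ : ∃ f : ℝ → ℝ, ∀ t, f t = -3 - 2 * t - (t ^ 2 - aInt b c 1 * t - b 0) / c 2 :=
    ⟨_, fun _ => rfl⟩
  have hD : ∀ (t : ℝ) (u : V → ℝ), distM G 1 *ᵥ u = t • u → ∑ x, u x = 0 →
      qDist G 3 1 *ᵥ u = f t • u := by
    intro t u ht hu
    rw [hf]; exact D_vec_eig hG hc2 u hu t ht
  have hne : ∀ (t : ℝ) (u : V → ℝ), u ≠ 0 → distM G 1 *ᵥ u = t • u → ∑ x, u x = 0 →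
      s ≠ f t := by
    intro t u hu ht hus e
    exact hu (perron hG s hs u hus (by rw [e]; exact hD t u ht hus))
  haveI : Nonempty V := hG.1.nonempty
  have hspecD : spectrum ℝ (qDist G 3 1) = {s, f θ₁, f θ₂, f θ₃} := by
    ext μ
    rw [mem_spec_iff]
    simp only [Set.mem_insert_iff, Set.mem_singleton_iff]
    constructor
    · rintro ⟨u, hu, h⟩
      by_cases hμ : μ = s
      · exact Or.inl hμ
      right
      have hus : ∑ x, u x = 0 := by
        have h5 := sum_D hG s hs u
        rw [h] at h5
        simp only [Pi.smul_apply, smul_eq_mul] at h5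
        rw [← Finset.mul_sum] at h5
        have h6 : (μ - s) * ∑ x, u x = 0 := by linarith
        exact (mul_eq_zero.1 h6).resolve_left (sub_ne_zero.2 hμ)
      by_cases z1 : distM G 1 *ᵥ u - θ₁ • u = 0
      · left; rw [hf]; exact eig_of hG hc2 u hu hus μ h _ z1
      right
      obtain ⟨sv, hv⟩ := step hG hc2 u hus μ h θ₁
      by_cases z2 : distM G 1 *ᵥ (distM G 1 *ᵥ u - θ₁ • u) - θ₂ • (distM G 1 *ᵥ u - θ₁ • u) = 0
      · left; rw [hf]; exact eig_of hG hc2 _ z1 sv μ hv _ z2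
      right
      obtain ⟨sw, hw⟩ := step hG hc2 _ sv μ hv θ₂
      rw [hf]
      refine eig_of hG hc2 _ z2 sw μ hw _ ?_
      ext x
      have e := cubic_vec hG u hus x
      rw [vp, vq, vr] at e
      simp only [Matrix.mulVec_sub, Matrix.mulVec_smul, Pi.sub_apply, Pi.smul_apply, smul_eq_mul,
        Pi.zero_apply]
      linear_combination e
    · rintro (rfl | rfl | rfl | rfl)
      · refine ⟨fun _ => 1, ?_, ?_⟩
        · intro h0
          have := congrFun h0 (Classical.arbitrary V)
          simp at this
        · ext x
          simpa [Matrix.mulVec, dotProduct] using hs x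
      · exact ⟨u₁, hu₁, hD _ _ hA₁ hs₁⟩
      · exact ⟨u₂, hu₂, hD _ _ hA₂ hs₂⟩
      · exact ⟨u₃, hu₃, hD _ _ hA₃ hs₃⟩
  have fe : ∀ x y : ℝ, x ≠ y → (f x = f y ↔ x + y = aInt b c 1 - 2 * c 2) := by
    intro x y hxy
    have e : f x - f y = (x - y) * (aInt b c 1 - 2 * c 2 - (x + y)) / c 2 := by
      rw [hf, hf]; field_simp; ring
    rw [← sub_eq_zero, e, div_eq_zero_iff, mul_eq_zero]
    constructor
    · rintro ((h | h) | h)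
      · exact absurd (sub_eq_zero.1 h) hxy
      · linarith
      · exact absurd h hc2
    · intro h; left; right; linarith
  rw [hspecD, ncard_lem (hne _ _ hu₁ hA₁ hs₁) (hne _ _ hu₂ hA₂ hs₂) (hne _ _ hu₃ hA₃ hs₃),
    fe _ _ n12, fe _ _ n13, fe _ _ n23]
  · simp only [Set.mem_insert_iff, Set.mem_singleton_iff]
    constructor
    · rintro (h | h | h)
      · right; right; linarith
      · right; left; linarith
      · left; linarith
    · rintro (h | h | h)
      · right; right; linarith
      · right; left; linarith
      · left; linarith
  · rw [fe _ _ n12, fe _ _ n23]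
    rintro ⟨h, h'⟩
    exact n13 (by linarith)
end

section
/- There exists no bipartite distance-regular graph G of diameter 3 whose q-distance matrix 𝔻_q has exactly 2 distinct eigenvalues, for any real number q ≠ 0. Equivalently: if G is a bipartite distance-regular graph of diameter 3 and q ≠ 0, then 𝔻_q has at least 3 distinct eigenvalues. -/
open Matrix

variable {V : Type*} [Fintype V] [DecidableEq V]

/-- `G` is bipartite: the vertex set can be split into two parts such that every edge has
one endpoint in each part. -/
def IsBipartiteGraph (G : SimpleGraph V) : Prop :=
  ∃ S : Set V, ∀ x y : V, G.Adj x y → (x ∈ S ↔ y ∉ S)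


lemma hlp_quad (M : Matrix V V ℝ) (hM : IsSelfAdjoint M)
    (h : (spectrum ℝ M).ncard = 2) :
    ∃ s p : ℝ, M * M = s • M + p • (1 : Matrix V V ℝ) := by
  obtain ⟨α, β, -, hs⟩ := Set.ncard_eq_two.mp h
  refine ⟨α + β, -(α * β), ?_⟩
  have h1 : cfc (fun x : ℝ => ((Polynomial.X - Polynomial.C α) *
      (Polynomial.X - Polynomial.C β) : Polynomial ℝ).eval x) M = 0 := by
    rw [← cfc_const_zero ℝ M]
    apply cfc_congr
    intro x hx
    rw [hs] at hx
    rcases hx with rfl | hx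
    · simp
    · have : x = β := hx
      simp [this]
  rw [cfc_polynomial _ M] at h1
  simp only [map_mul, map_sub, Polynomial.aeval_X, Polynomial.aeval_C,
    Algebra.algebraMap_eq_smul_one] at h1
  simp only [sub_mul, mul_sub, smul_mul_assoc, mul_smul_comm, one_mul, mul_one, smul_smul] at h1
  have h2 : M * M = M * M - (M * M - β • M - (α • M - (β * α) • (1 : Matrix V V ℝ))) := by
    rw [← sub_eq_zero]
    rw [sub_sub_cancel]
    first
      | exact h1
      | (rw [← h1]; module)
  rw [h2]
  module

lemma hlp_par (G : SimpleGraph V) (S : Set V) (hS : ∀ x y : V, G.Adj x y → (x ∈ S ↔ y ∉ S))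
    {x y : V} (w : G.Walk x y) : Even w.length ↔ (x ∈ S ↔ y ∈ S) := by
  induction w with
  | nil => simp
  | cons h p ih =>
    have := hS _ _ h
    rw [SimpleGraph.Walk.length_cons, Nat.even_add_one, ih]
    tauto

/-- Proposition 3.8: there is no bipartite distance-regular graph of
diameter 3 whose `q`-distance matrix has exactly 2 distinct eigenvalues (for any `q ≠ 0`). -/
theorem stmt11 (G : SimpleGraph V) (b c : ℕ → ℕ) (hG : IsDRG G 3 b c)
    (hbip : IsBipartiteGraph G) (q : ℝ) (hq : q ≠ 0) :
    (spectrum ℝ (qDist G 3 q)).ncard ≠ 2 := by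
  classical
  intro hcard
  obtain ⟨hconn, hle, ⟨x0, x3, h03⟩, -, -⟩ := hG
  obtain ⟨S, hS⟩ := hbip
  obtain ⟨r, hr⟩ : ∃ r, r = 1 / q := ⟨_, rfl⟩
  have hr0 : r ≠ 0 := by rw [hr]; exact one_div_ne_zero hq
  have hent : ∀ x y, qDist G 3 q x y = (if G.dist x y = 1 then 1 else 0) +
      (1 + r) * (if G.dist x y = 2 then 1 else 0) +
      (1 + r + r ^ 2) * (if G.dist x y = 3 then 1 else 0) := by
    intro x y
    have : Finset.Icc 1 3 = ({1, 2, 3} : Finset ℕ) := by decide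
    simp only [qDist, this, ← hr]
    simp [Finset.sum_range_succ, distM, Matrix.add_apply]
    ring
  have hsymm : ∀ x y, qDist G 3 q x y = qDist G 3 q y x := by
    intro x y; rw [hent, hent, SimpleGraph.dist_comm]
  have hsa : IsSelfAdjoint (qDist G 3 q) := by
    change (qDist G 3 q)ᴴ = qDist G 3 q
    ext x y
    simp [Matrix.conjTranspose_apply, hsymm y x]
  obtain ⟨s, p, hM⟩ := hlp_quad _ hsa hcard
  generalize qDist G 3 q = M at *
  have hpar : ∀ x y, Even (G.dist x y) ↔ (x ∈ S ↔ y ∈ S) := by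
    intro x y
    obtain ⟨w, hw⟩ := hconn.exists_walk_length_eq_dist x y
    rw [← hw]; exact hlp_par G S hS w
  have hsame : ∀ x y, (x ∈ S ↔ y ∈ S) → M x y = (1 + r) - if x = y then (1 + r) else 0 := by
    intro x y h
    have h1 := (hpar x y).2 h
    have h2 := hle x y
    rw [hent]
    by_cases hxy : x = y
    · subst hxy; simp
    · have h3 : G.dist x y ≠ 0 := (hconn.pos_dist_of_ne hxy).ne'
      have : G.dist x y = 2 := by
        obtain ⟨m, hm⟩ := h1; omega
      simp [this, hxy]
  have hw3 : 0 < 1 + r + r ^ 2 := by nlinarith [sq_nonneg (r + 1/2)]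
  have hdiff : ∀ x y, ¬ (x ∈ S ↔ y ∈ S) → 0 < M x y := by
    intro x y h
    have h1 := (hpar x y).not.2 h
    rw [Nat.not_even_iff_odd] at h1
    have h2 := hle x y
    have : G.dist x y = 1 ∨ G.dist x y = 3 := by
      obtain ⟨m, hm⟩ := h1; omega
    rw [hent]
    rcases this with h | h <;> simp [h, hw3]
  obtain ⟨C, hC⟩ : ∃ C : V → ℝ, ∀ x, C x = ∑ z, if (x ∈ S ↔ z ∈ S) then 0 else M x z :=
    ⟨_, fun _ => rfl⟩
  have hCpos : ∀ x y, ¬ (x ∈ S ↔ y ∈ S) → 0 < C x := by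
    intro x y h
    rw [hC]
    apply Finset.sum_pos'
    · intro z _
      split_ifs with hz
      · exact le_rfl
      · exact (hdiff x z hz).le
    · exact ⟨y, Finset.mem_univ _, by rw [if_neg h]; exact hdiff x y h⟩
  have hsq : ∀ x y, (M * M) x y = s * M x y + p * (if x = y then 1 else 0) := by
    intro x y; rw [hM]; simp [Matrix.one_apply]
  have hkey : ∀ x y, ¬ (x ∈ S ↔ y ∈ S) →
      (1 + r) * (C x + C y) = (s + 2 * (1 + r)) * M x y := by
    intro x y h
    have hxy : x ≠ y := by rintro rfl; exact h Iff.rfl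
    have h1 := hsq x y
    rw [if_neg hxy, Matrix.mul_apply] at h1
    have h2 : ∀ z, M x z * M z y = (1 + r) * (if (x ∈ S ↔ z ∈ S) then 0 else M x z)
        + (1 + r) * (if (y ∈ S ↔ z ∈ S) then 0 else M y z)
        - (if x = z then (1 + r) * M x y else 0) - (if y = z then (1 + r) * M x y else 0) := by
      intro z
      by_cases hxz : (x ∈ S ↔ z ∈ S)
      · have hyz : ¬ (y ∈ S ↔ z ∈ S) := by tauto
        have hyz' : y ≠ z := by rintro rfl; exact hyz Iff.rfl
        rw [hsame x z hxz, if_pos hxz, if_neg hyz, if_neg hyz', hsymm z y]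
        split_ifs with e
        · subst e; rw [hsymm y x]; ring
        · ring
      · have hyz : (z ∈ S ↔ y ∈ S) := by tauto
        have hyz2 : (y ∈ S ↔ z ∈ S) := by tauto
        have hxz' : x ≠ z := by rintro rfl; exact hxz Iff.rfl
        rw [hsame z y hyz, if_neg hxz, if_pos hyz2, if_neg hxz']
        by_cases e : y = z
        · subst e; simp
        · rw [if_neg e, if_neg (Ne.symm e)]; ring
    simp only [h2, Finset.sum_sub_distrib, Finset.sum_add_distrib, ← Finset.mul_sum, ← hC,
      Finset.sum_ite_eq, Finset.mem_univ, if_true] at h1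
    linarith
  obtain ⟨w, hw⟩ := hconn.exists_walk_length_eq_dist x0 x3
  rw [h03] at hw
  cases w with
  | nil => simp at hw
  | @cons _ x1 _ h01 w =>
  cases w with
  | nil => simp at hw
  | @cons _ x2 _ h12 w =>
  cases w with
  | nil => simp at hw
  | @cons _ x3' _ h23 w =>
  cases w with
  | cons _ _ => simp at hw
  | nil =>
  have e01 : M x0 x1 = 1 := by rw [hent]; simp [SimpleGraph.dist_eq_one_iff_adj.2 h01]
  have e12 : M x1 x2 = 1 := by rw [hent]; simp [SimpleGraph.dist_eq_one_iff_adj.2 h12]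
  have e23 : M x2 x3 = 1 := by rw [hent]; simp [SimpleGraph.dist_eq_one_iff_adj.2 h23]
  have e03 : M x0 x3 = 1 + r + r ^ 2 := by rw [hent]; simp [h03]
  have s01 := hS _ _ h01
  have s12 := hS _ _ h12
  have s23 := hS _ _ h23
  have k01 := hkey x0 x1 (by tauto)
  have k12 := hkey x1 x2 (by tauto)
  have k23 := hkey x2 x3 (by tauto)
  have k03 := hkey x0 x3 (by tauto)
  rw [e01] at k01
  rw [e12] at k12
  rw [e23] at k23
  rw [e03] at k03
  have p0 := hCpos x0 x1 (by tauto)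
  have p1 := hCpos x1 x2 (by tauto)
  have k : (s + 2 * (1 + r)) * (r * (1 + r)) = 0 := by linarith
  by_cases hr1 : 1 + r = 0
  · have hne : x0 ≠ x2 := by
      rintro rfl
      rw [SimpleGraph.dist_eq_one_iff_adj.2 h23] at h03
      omega
    have h1 := hsq x0 x2
    rw [hsame x0 x2 (by tauto), if_neg hne, hr1, Matrix.mul_apply] at h1
    have : 0 < ∑ z, M x0 z * M z x2 := by
      apply Finset.sum_pos'
      · intro z _
        by_cases hz : (x0 ∈ S ↔ z ∈ S)
        · rw [hsame x0 z hz, hr1]; simp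
        · exact (mul_pos (hdiff x0 z hz) (hdiff z x2 (by tauto))).le
      · exact ⟨x1, Finset.mem_univ _, by rw [e01, e12]; norm_num⟩
    simp [hne] at h1
    linarith
  · have h0 : s + 2 * (1 + r) = 0 := by
      rcases mul_eq_zero.1 k with h | h
      · exact h
      · exact absurd h (mul_ne_zero hr0 hr1)
    rw [h0, zero_mul] at k01
    rcases mul_eq_zero.1 k01 with h | h
    · exact hr1 h
    · linarith
end
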